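/- arXiv:cs/0510029 — 2 statements merged into one kernel-verified Lean document; each statement's English description precedes it below -/
import Mathlib

section
/- Let α₁ and β₁ be random variables on a finite probability space Ω₁ that are conditionally independent of order k₁, and let α₂ and β₂ be random variables on a finite probability space Ω₂ that are conditionally independent of order k₂. On the product probability space Ω₁ × Ω₂ (with the product measure), the random variables (α₁, α₂) and (β₁, β₂) are conditionally independent of order max(k₁, k₂). -/
open scoped BigOperators Classical

noncomputable section

/-- Probability of an event `E` under a distribution `μ` on a finite sample space `Ω`. -/
def pr {Ω : Type} [Fintype Ω] (μ : Ω → ℝ) (E : Ω → Prop) : ℝ :=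
  ∑ ω, if E ω then μ ω else 0

/-- `μ` is a probability distribution on the finite space `Ω`. -/
def IsProb {Ω : Type} [Fintype Ω] (μ : Ω → ℝ) : Prop :=
  (∀ ω, 0 ≤ μ ω) ∧ ∑ ω, μ ω = 1

/-- Shannon entropy (base 2) of a random variable `α` on a finite probability space. -/
def ent {Ω A : Type} [Fintype Ω] (μ : Ω → ℝ) (α : Ω → A) : ℝ :=
  -∑ a ∈ Finset.univ.image α,
      pr μ (fun ω => α ω = a) * Real.logb 2 (pr μ (fun ω => α ω = a))

/-- Conditional entropy `H(α | β)`. -/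
def condEnt {Ω A B : Type} [Fintype Ω] (μ : Ω → ℝ) (α : Ω → A) (β : Ω → B) : ℝ :=
  ent μ (fun ω => (α ω, β ω)) - ent μ β

/-- Mutual information `I(α : β)`. -/
def mutualInfo {Ω A B : Type} [Fintype Ω] (μ : Ω → ℝ) (α : Ω → A) (β : Ω → B) : ℝ :=
  ent μ α + ent μ β - ent μ (fun ω => (α ω, β ω))

/-- Conditional mutual information `I(α : β | γ)`. -/
def condMutualInfo {Ω A B C : Type} [Fintype Ω] (μ : Ω → ℝ)
    (α : Ω → A) (β : Ω → B) (γ : Ω → C) : ℝ :=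
  condEnt μ α γ + condEnt μ β γ - condEnt μ (fun ω => (α ω, β ω)) γ

/-- Independence of two random variables. -/
def Indep {Ω A B : Type} [Fintype Ω] (μ : Ω → ℝ) (α : Ω → A) (β : Ω → B) : Prop :=
  ∀ (a : A) (b : B),
    pr μ (fun ω => α ω = a ∧ β ω = b) =
      pr μ (fun ω => α ω = a) * pr μ (fun ω => β ω = b)

/-- Auxiliary form of "conditionally independent of order `k`" (explicit `Fintype`):
`α` and `β` are conditionally independent of order `0` if they are independent,
and of order `k + 1` if on some finite probability space there are random variables
`α₀, β₀, α*, β*` such that `(α₀, β₀)` has the same joint distribution as `(α, β)`,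
`I(α₀ : β₀ | α*) = 0`, `I(α₀ : β₀ | β*) = 0`, and `α*, β*` are conditionally
independent of order `k`. -/
def CondIndepOrderAux : ℕ → (Ω A B : Type) → Fintype Ω → (Ω → ℝ) → (Ω → A) → (Ω → B) → Prop
  | 0, _Ω, _A, _B, iΩ, μ, α, β => @Indep _ _ _ iΩ μ α β
  | k+1, _Ω, A, B, iΩ, μ, α, β =>
      ∃ (Ω' A' B' : Type) (iΩ' : Fintype Ω') (μ' : Ω' → ℝ)
        (α₀ : Ω' → A) (β₀ : Ω' → B) (αs : Ω' → A') (βs : Ω' → B'),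
        @IsProb _ iΩ' μ' ∧
        (∀ (a : A) (b : B),
          @pr _ iΩ' μ' (fun ω => α₀ ω = a ∧ β₀ ω = b) =
            @pr _ iΩ μ (fun ω => α ω = a ∧ β ω = b)) ∧
        @condMutualInfo _ _ _ _ iΩ' μ' α₀ β₀ αs = 0 ∧
        @condMutualInfo _ _ _ _ iΩ' μ' α₀ β₀ βs = 0 ∧
        CondIndepOrderAux k Ω' A' B' iΩ' μ' αs βs

/-- Random variables `α` and `β` on a finite probability space are
conditionally independent of order `k`. -/
def CondIndepOrder {Ω A B : Type} [iΩ : Fintype Ω]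
    (μ : Ω → ℝ) (α : Ω → A) (β : Ω → B) (k : ℕ) : Prop :=
  CondIndepOrderAux k Ω A B iΩ μ α β

/-- An `m × n` joint probability matrix: nonnegative entries summing to `1`. -/
def IsJointProbMatrix {m n : ℕ} (M : Matrix (Fin m) (Fin n) ℝ) : Prop :=
  (∀ i j, 0 ≤ M i j) ∧ ∑ i, ∑ j, M i j = 1

/-- `M` is the joint probability matrix of the pair `(α, β)`. -/
def IsJointMatrixOf {Ω : Type} [Fintype Ω] {m n : ℕ} (M : Matrix (Fin m) (Fin n) ℝ)
    (μ : Ω → ℝ) (α : Ω → Fin m) (β : Ω → Fin n) : Prop :=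
  ∀ i j, M i j = pr μ (fun ω => α ω = i ∧ β ω = j)

/-- `M` is a block matrix: rows and columns can be partitioned into two nonempty
parts so that the two diagonal blocks each contain a nonzero element and all
entries outside the diagonal blocks vanish. -/
def IsBlockMatrix {m n : ℕ} (M : Matrix (Fin m) (Fin n) ℝ) : Prop :=
  ∃ (I₁ : Finset (Fin m)) (J₁ : Finset (Fin n)),
    I₁.Nonempty ∧ I₁ᶜ.Nonempty ∧ J₁.Nonempty ∧ J₁ᶜ.Nonempty ∧
    (∃ i ∈ I₁, ∃ j ∈ J₁, M i j ≠ 0) ∧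
    (∃ i ∈ I₁ᶜ, ∃ j ∈ J₁ᶜ, M i j ≠ 0) ∧
    (∀ i j, ((i ∈ I₁ ∧ j ∈ J₁ᶜ) ∨ (i ∈ I₁ᶜ ∧ j ∈ J₁)) → M i j = 0)

/-- `M` is a good matrix: the joint probability matrix of some pair of
conditionally independent random variables (of some finite order). -/
def IsGoodMatrix {m n : ℕ} (M : Matrix (Fin m) (Fin n) ℝ) : Prop :=
  ∃ (Ω : Type) (iΩ : Fintype Ω) (μ : Ω → ℝ) (α : Ω → Fin m) (β : Ω → Fin n) (k : ℕ),
    @IsProb _ iΩ μ ∧ @IsJointMatrixOf _ iΩ _ _ M μ α β ∧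
    @CondIndepOrder _ _ _ iΩ μ α β k

/-- A stochastic matrix: nonnegative entries, all row sums equal to `1`. -/
def IsStochastic {m n : ℕ} (A : Matrix (Fin m) (Fin n) ℝ) : Prop :=
  (∀ i j, 0 ≤ A i j) ∧ ∀ i, ∑ j, A i j = 1

/-- The matrix `D_ε`: diagonal entries `1/2 - ε`, off-diagonal entries `ε`. -/
def Dmat (ε : ℝ) : Matrix (Fin 2) (Fin 2) ℝ :=
  fun i j => if i = j then 1/2 - ε else ε

/-- The distribution of `n` i.i.d. trials, each distributed according to `μ`. -/
def iidMeasure {Ω : Type} [Fintype Ω] (μ : Ω → ℝ) (n : ℕ) : (Fin n → Ω) → ℝ :=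
  fun ωv => ∏ i, μ (ωv i)

/-- The sequence of `n` coordinatewise copies of a random variable. -/
def iidRV {Ω A : Type} (α : Ω → A) (n : ℕ) : (Fin n → Ω) → (Fin n → A) :=
  fun ωv i => α (ωv i)

/-- `(u, v, w)` belongs to the rate region of the pair `(α, β)`. -/
def InRateRegion {Ω A B : Type} [Fintype Ω] (μ : Ω → ℝ) (α : Ω → A) (β : Ω → B)
    (u v w : ℝ) : Prop :=
  0 ≤ u ∧ 0 ≤ v ∧ 0 ≤ w ∧
  ∀ ε > (0:ℝ), ∀ δ > (0:ℝ), ∃ n₀ : ℕ, ∀ n ≥ n₀,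
    ∃ (t : (Fin n → A) × (Fin n → B) → (Fin ⌊(u + δ) * n⌋₊ → Bool))
      (f : (Fin n → A) × (Fin n → B) → (Fin ⌊(v + δ) * n⌋₊ → Bool))
      (g : (Fin n → A) × (Fin n → B) → (Fin ⌊(w + δ) * n⌋₊ → Bool))
      (r : (Fin ⌊(u + δ) * n⌋₊ → Bool) × (Fin ⌊(v + δ) * n⌋₊ → Bool) → (Fin n → A))
      (s : (Fin ⌊(u + δ) * n⌋₊ → Bool) × (Fin ⌊(w + δ) * n⌋₊ → Bool) → (Fin n → B)),
      pr (iidMeasure μ n) (fun ωv =>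
          r (t (iidRV α n ωv, iidRV β n ωv), f (iidRV α n ωv, iidRV β n ωv)) = iidRV α n ωv)
        > 1 - ε ∧
      pr (iidMeasure μ n) (fun ωv =>
          s (t (iidRV α n ωv, iidRV β n ωv), g (iidRV α n ωv, iidRV β n ωv)) = iidRV β n ωv)
        > 1 - ε

/-- The support of a matrix: the set of positions of its nonzero entries. -/
def msupport {m n : ℕ} (M : Matrix (Fin m) (Fin n) ℝ) : Set (Fin m × Fin n) :=
  {p | M p.1 p.2 ≠ 0}

/-- An r-matrix: nonnegative entries and rectangular support. -/
def IsRMatrix {m n : ℕ} (M : Matrix (Fin m) (Fin n) ℝ) : Prop :=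
  (∀ i j, 0 ≤ M i j) ∧ ∃ (A : Set (Fin m)) (B : Set (Fin n)), msupport M = A ×ˢ B

/-- An r-decomposition of `M`: an expression of `M` as a finite sum of r-matrices
such that the supports of consecutive summands intersect. -/
def IsRDecomposition {m n : ℕ} (M : Matrix (Fin m) (Fin n) ℝ)
    (l : ℕ) (Ms : Fin l → Matrix (Fin m) (Fin n) ℝ) : Prop :=
  M = ∑ i, Ms i ∧ (∀ i, IsRMatrix (Ms i)) ∧
  ∀ (i : ℕ) (h : i + 1 < l),
    (msupport (Ms ⟨i, Nat.lt_of_succ_lt h⟩) ∩ msupport (Ms ⟨i + 1, h⟩)).Nonempty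

end

theorem ent_expect {Ω A : Type} [Fintype Ω] (μ : Ω → ℝ) (α : Ω → A) :
    ent μ α = -∑ ω, μ ω * Real.logb 2 (pr μ (fun ω' => α ω' = α ω)) := by
  unfold ent
  congr 1
  rw [← Finset.sum_fiberwise_of_maps_to (s := Finset.univ) (t := Finset.univ.image α) (g := α)
    (fun ω _ => Finset.mem_image_of_mem α (Finset.mem_univ ω))]
  refine Finset.sum_congr rfl fun a _ => ?_
  have h1 : pr μ (fun ω => α ω = a) = ∑ ω ∈ Finset.univ.filter (fun ω => α ω = a), μ ω := by
    unfold pr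
    rw [Finset.sum_filter]
  conv_lhs => rw [h1, Finset.sum_mul]
  refine Finset.sum_congr rfl fun ω hω => ?_
  have h2 : α ω = a := (Finset.mem_filter.mp hω).2
  rw [h2, ← h1]

theorem ent_congr {Ω A B : Type} [Fintype Ω] (μ : Ω → ℝ) (α : Ω → A) (β : Ω → B)
    (h : ∀ ω ω', α ω' = α ω ↔ β ω' = β ω) : ent μ α = ent μ β := by
  simp only [ent_expect, h]

theorem pr_prod {Ω₁ Ω₂ : Type} [Fintype Ω₁] [Fintype Ω₂] (μ₁ : Ω₁ → ℝ) (μ₂ : Ω₂ → ℝ)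
    (E₁ : Ω₁ → Prop) (E₂ : Ω₂ → Prop) (E : Ω₁ × Ω₂ → Prop)
    (hE : ∀ ω, E ω ↔ E₁ ω.1 ∧ E₂ ω.2) :
    pr (fun ω : Ω₁ × Ω₂ => μ₁ ω.1 * μ₂ ω.2) E = pr μ₁ E₁ * pr μ₂ E₂ := by
  unfold pr
  rw [Finset.sum_mul_sum, Fintype.sum_prod_type]
  refine Finset.sum_congr rfl fun x _ => Finset.sum_congr rfl fun y _ => ?_
  by_cases h1 : E₁ x <;> by_cases h2 : E₂ y <;> simp [hE, h1, h2]

theorem pr_ne_zero {Ω A : Type} [Fintype Ω] (μ : Ω → ℝ) (hμ : IsProb μ) (α : Ω → A) (ω : Ω)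
    (h : μ ω ≠ 0) : pr μ (fun ω' => α ω' = α ω) ≠ 0 := by
  have h0 : 0 < μ ω := lt_of_le_of_ne (hμ.1 ω) (Ne.symm h)
  have h1 : μ ω ≤ pr μ (fun ω' => α ω' = α ω) := by
    unfold pr
    have := Finset.single_le_sum (f := fun ω' => if α ω' = α ω then μ ω' else 0)
      (s := Finset.univ) (fun i _ => by
        split_ifs
        · exact hμ.1 i
        · exact le_rfl) (Finset.mem_univ ω)
    simpa using this
  exact (lt_of_lt_of_le h0 h1).ne'

theorem ent_prod {Ω₁ Ω₂ A B C : Type} [Fintype Ω₁] [Fintype Ω₂] (μ₁ : Ω₁ → ℝ) (μ₂ : Ω₂ → ℝ)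
    (hμ₁ : IsProb μ₁) (hμ₂ : IsProb μ₂) (α : Ω₁ → A) (β : Ω₂ → B) (γ : Ω₁ × Ω₂ → C)
    (h : ∀ ω ω', γ ω' = γ ω ↔ α ω'.1 = α ω.1 ∧ β ω'.2 = β ω.2) :
    ent (fun ω : Ω₁ × Ω₂ => μ₁ ω.1 * μ₂ ω.2) γ = ent μ₁ α + ent μ₂ β := by
  simp only [ent_expect]
  have key : ∀ ω : Ω₁ × Ω₂, μ₁ ω.1 * μ₂ ω.2 *
      Real.logb 2 (pr (fun ω : Ω₁ × Ω₂ => μ₁ ω.1 * μ₂ ω.2) (fun ω' => γ ω' = γ ω)) =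
      (μ₁ ω.1 * Real.logb 2 (pr μ₁ (fun ω' => α ω' = α ω.1))) * μ₂ ω.2 +
      μ₁ ω.1 * (μ₂ ω.2 * Real.logb 2 (pr μ₂ (fun ω' => β ω' = β ω.2))) := by
    intro ω
    rw [pr_prod μ₁ μ₂ (fun ω' => α ω' = α ω.1) (fun ω' => β ω' = β ω.2) _ (fun ω' => h ω ω')]
    by_cases h1 : μ₁ ω.1 = 0
    · simp [h1]
    by_cases h2 : μ₂ ω.2 = 0
    · simp [h2]
    rw [Real.logb_mul (pr_ne_zero μ₁ hμ₁ α _ h1) (pr_ne_zero μ₂ hμ₂ β _ h2)]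
    ring
  rw [Finset.sum_congr rfl (fun ω _ => key ω), Finset.sum_add_distrib, Fintype.sum_prod_type,
    Fintype.sum_prod_type]
  dsimp only
  rw [← Finset.sum_mul_sum, ← Finset.sum_mul_sum, hμ₁.2, hμ₂.2]
  ring

theorem condMutualInfo_prod {Ω₁ Ω₂ A₁ B₁ C₁ A₂ B₂ C₂ : Type} [Fintype Ω₁] [Fintype Ω₂]
    (μ₁ : Ω₁ → ℝ) (μ₂ : Ω₂ → ℝ) (hμ₁ : IsProb μ₁) (hμ₂ : IsProb μ₂)
    (α₁ : Ω₁ → A₁) (β₁ : Ω₁ → B₁) (γ₁ : Ω₁ → C₁) (α₂ : Ω₂ → A₂) (β₂ : Ω₂ → B₂) (γ₂ : Ω₂ → C₂)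
    (h₁ : condMutualInfo μ₁ α₁ β₁ γ₁ = 0) (h₂ : condMutualInfo μ₂ α₂ β₂ γ₂ = 0) :
    condMutualInfo (fun ω : Ω₁ × Ω₂ => μ₁ ω.1 * μ₂ ω.2) (fun ω => (α₁ ω.1, α₂ ω.2))
      (fun ω => (β₁ ω.1, β₂ ω.2)) (fun ω => (γ₁ ω.1, γ₂ ω.2)) = 0 := by
  unfold condMutualInfo condEnt at *
  dsimp only at h₁ h₂ ⊢
  rw [ent_prod μ₁ μ₂ hμ₁ hμ₂ (fun ω => (α₁ ω, γ₁ ω)) (fun ω => (α₂ ω, γ₂ ω))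
      (fun ω => ((α₁ ω.1, α₂ ω.2), (γ₁ ω.1, γ₂ ω.2))),
    ent_prod μ₁ μ₂ hμ₁ hμ₂ (fun ω => (β₁ ω, γ₁ ω)) (fun ω => (β₂ ω, γ₂ ω))
      (fun ω => ((β₁ ω.1, β₂ ω.2), (γ₁ ω.1, γ₂ ω.2))),
    ent_prod μ₁ μ₂ hμ₁ hμ₂ (fun ω => ((α₁ ω, β₁ ω), γ₁ ω)) (fun ω => ((α₂ ω, β₂ ω), γ₂ ω))
      (fun ω => (((α₁ ω.1, α₂ ω.2), (β₁ ω.1, β₂ ω.2)), (γ₁ ω.1, γ₂ ω.2))),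
    ent_prod μ₁ μ₂ hμ₁ hμ₂ γ₁ γ₂ (fun ω => (γ₁ ω.1, γ₂ ω.2))]
  · linarith
  all_goals
    intro ω ω'
    simp only [Prod.mk.injEq]
    try tauto

theorem order_succ {Ω A B : Type} [Fintype Ω] (μ : Ω → ℝ) (hμ : IsProb μ)
    (α : Ω → A) (β : Ω → B) (k : ℕ) (h : CondIndepOrder μ α β k) :
    CondIndepOrder μ α β (k + 1) := by
  refine ⟨Ω, A, B, inferInstance, μ, α, β, α, β, hμ, fun _ _ => rfl, ?_, ?_, h⟩
  · unfold condMutualInfo condEnt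
    rw [ent_congr μ (fun ω => (α ω, α ω)) α (by intro ω ω'; simp only [Prod.mk.injEq]; tauto),
      ent_congr μ (fun ω => ((α ω, β ω), α ω)) (fun ω => (β ω, α ω))
        (by intro ω ω'; simp only [Prod.mk.injEq]; tauto)]
    ring
  · unfold condMutualInfo condEnt
    rw [ent_congr μ (fun ω => (β ω, β ω)) β (by intro ω ω'; simp only [Prod.mk.injEq]; tauto),
      ent_congr μ (fun ω => ((α ω, β ω), β ω)) (fun ω => (α ω, β ω))
        (by intro ω ω'; simp only [Prod.mk.injEq]; tauto)]
    ring

theorem order_mono {Ω A B : Type} [Fintype Ω] (μ : Ω → ℝ) (hμ : IsProb μ)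
    (α : Ω → A) (β : Ω → B) (k l : ℕ) (hkl : k ≤ l) (h : CondIndepOrder μ α β k) :
    CondIndepOrder μ α β l := by
  induction l, hkl using Nat.le_induction with
  | base => exact h
  | succ n _ ih => exact order_succ μ hμ α β n ih

theorem isProb_prod {Ω₁ Ω₂ : Type} [Fintype Ω₁] [Fintype Ω₂] (μ₁ : Ω₁ → ℝ) (μ₂ : Ω₂ → ℝ)
    (hμ₁ : IsProb μ₁) (hμ₂ : IsProb μ₂) :
    IsProb (fun ω : Ω₁ × Ω₂ => μ₁ ω.1 * μ₂ ω.2) := by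
  refine ⟨fun ω => mul_nonneg (hμ₁.1 _) (hμ₂.1 _), ?_⟩
  rw [Fintype.sum_prod_type]
  dsimp only
  rw [← Finset.sum_mul_sum, hμ₁.2, hμ₂.2, one_mul]

theorem pr_pair {Ω₁ Ω₂ A₁ B₁ A₂ B₂ : Type} [Fintype Ω₁] [Fintype Ω₂]
    (μ₁ : Ω₁ → ℝ) (μ₂ : Ω₂ → ℝ)
    (α₁ : Ω₁ → A₁) (β₁ : Ω₁ → B₁) (α₂ : Ω₂ → A₂) (β₂ : Ω₂ → B₂) (a : A₁ × A₂) (b : B₁ × B₂) :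
    pr (fun ω : Ω₁ × Ω₂ => μ₁ ω.1 * μ₂ ω.2)
      (fun ω => (α₁ ω.1, α₂ ω.2) = a ∧ (β₁ ω.1, β₂ ω.2) = b) =
    pr μ₁ (fun ω => α₁ ω = a.1 ∧ β₁ ω = b.1) * pr μ₂ (fun ω => α₂ ω = a.2 ∧ β₂ ω = b.2) := by
  apply pr_prod
  intro ω
  simp only [Prod.ext_iff]
  tauto

theorem order_same (k : ℕ) : ∀ {Ω₁ Ω₂ A₁ B₁ A₂ B₂ : Type} [Fintype Ω₁] [Fintype Ω₂]
    (μ₁ : Ω₁ → ℝ) (_ : IsProb μ₁) (μ₂ : Ω₂ → ℝ) (_ : IsProb μ₂)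
    (α₁ : Ω₁ → A₁) (β₁ : Ω₁ → B₁) (α₂ : Ω₂ → A₂) (β₂ : Ω₂ → B₂)
    (_ : CondIndepOrder μ₁ α₁ β₁ k) (_ : CondIndepOrder μ₂ α₂ β₂ k),
    CondIndepOrder (fun ω : Ω₁ × Ω₂ => μ₁ ω.1 * μ₂ ω.2)
      (fun ω => (α₁ ω.1, α₂ ω.2)) (fun ω => (β₁ ω.1, β₂ ω.2)) k := by
  induction k with
  | zero =>
    intro Ω₁ Ω₂ A₁ B₁ A₂ B₂ _ _ μ₁ hμ₁ μ₂ hμ₂ α₁ β₁ α₂ β₂ h₁ h₂ a b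
    have e₁ := h₁ a.1 b.1
    have e₂ := h₂ a.2 b.2
    rw [pr_pair, e₁, e₂,
      pr_prod μ₁ μ₂ (fun ω => α₁ ω = a.1) (fun ω => α₂ ω = a.2) _ (fun ω => Prod.ext_iff),
      pr_prod μ₁ μ₂ (fun ω => β₁ ω = b.1) (fun ω => β₂ ω = b.2) _ (fun ω => Prod.ext_iff)]
    ring
  | succ k ih =>
    intro Ω₁ Ω₂ A₁ B₁ A₂ B₂ _ _ μ₁ hμ₁ μ₂ hμ₂ α₁ β₁ α₂ β₂ h₁ h₂
    obtain ⟨Ω₁', A₁', B₁', i₁, ν₁, a₁, b₁, as₁, bs₁, hν₁, hd₁, hA₁, hB₁, hk₁⟩ := h₁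
    obtain ⟨Ω₂', A₂', B₂', i₂, ν₂, a₂, b₂, as₂, bs₂, hν₂, hd₂, hA₂, hB₂, hk₂⟩ := h₂
    refine ⟨Ω₁' × Ω₂', A₁' × A₂', B₁' × B₂', inferInstance, fun ω => ν₁ ω.1 * ν₂ ω.2,
      fun ω => (a₁ ω.1, a₂ ω.2), fun ω => (b₁ ω.1, b₂ ω.2),
      fun ω => (as₁ ω.1, as₂ ω.2), fun ω => (bs₁ ω.1, bs₂ ω.2),
      isProb_prod _ _ hν₁ hν₂, ?_, condMutualInfo_prod _ _ hν₁ hν₂ _ _ _ _ _ _ hA₁ hA₂,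
      condMutualInfo_prod _ _ hν₁ hν₂ _ _ _ _ _ _ hB₁ hB₂,
      ih ν₁ hν₁ ν₂ hν₂ as₁ bs₁ as₂ bs₂ hk₁ hk₂⟩
    intro a b
    rw [pr_pair, pr_pair, hd₁, hd₂]

/-- If `α₁, β₁` on `Ω₁` are conditionally independent of order `k₁` and
`α₂, β₂` on `Ω₂` are conditionally independent of order `k₂`, then on `Ω₁ × Ω₂`
(with the product measure) the pairs `(α₁, α₂)` and `(β₁, β₂)` are conditionally
independent of order `max k₁ k₂`. -/
theorem condIndepOrder_prod {Ω₁ Ω₂ A₁ B₁ A₂ B₂ : Type} [Fintype Ω₁] [Fintype Ω₂]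
    (μ₁ : Ω₁ → ℝ) (hμ₁ : IsProb μ₁) (μ₂ : Ω₂ → ℝ) (hμ₂ : IsProb μ₂)
    (α₁ : Ω₁ → A₁) (β₁ : Ω₁ → B₁) (α₂ : Ω₂ → A₂) (β₂ : Ω₂ → B₂) (k₁ k₂ : ℕ)
    (h₁ : CondIndepOrder μ₁ α₁ β₁ k₁) (h₂ : CondIndepOrder μ₂ α₂ β₂ k₂) :
    CondIndepOrder (fun ω : Ω₁ × Ω₂ => μ₁ ω.1 * μ₂ ω.2)
      (fun ω => (α₁ ω.1, α₂ ω.2)) (fun ω => (β₁ ω.1, β₂ ω.2)) (max k₁ k₂) := by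
  exact order_same _ μ₁ hμ₁ μ₂ hμ₂ α₁ β₁ α₂ β₂
    (order_mono μ₁ hμ₁ α₁ β₁ _ _ (le_max_left _ _) h₁)
    (order_mono μ₂ hμ₂ α₂ β₂ _ _ (le_max_right _ _) h₂)
end

section
/- The set of good matrices is dense in the set of all joint probability matrices: for every m×n joint probability matrix A and every δ > 0 there exists a good m×n joint probability matrix B such that |a_ij − b_ij| < δ for all i, j. -/
open scoped BigOperators Classical

noncomputable section

lemma pr_prod_s11 {X Y : Type} [Fintype X] [Fintype Y] (ν : X × Y → ℝ) (E : X → Prop) (E' : Y → Prop) :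
    pr ν (fun p => E p.1 ∧ E' p.2) = pr (fun x => pr (fun y => ν (x, y)) E') E := by
  unfold pr
  rw [Fintype.sum_prod_type]
  refine Finset.sum_congr rfl fun x _ => ?_
  by_cases h : E x <;> simp [h]

lemma pr_fst {X Y : Type} [Fintype X] [Fintype Y] (ν : X × Y → ℝ) (E : X → Prop) :
    pr ν (fun p => E p.1) = pr (fun x => ∑ y, ν (x, y)) E := by
  unfold pr
  rw [Fintype.sum_prod_type]
  refine Finset.sum_congr rfl fun x _ => ?_
  by_cases h : E x <;> simp [h]

lemma pr_snd {X Y : Type} [Fintype X] [Fintype Y] (ν : X × Y → ℝ) (E : Y → Prop) :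
    pr ν (fun p => E p.2) = pr (fun y => ∑ x, ν (x, y)) E := by
  unfold pr
  rw [Fintype.sum_prod_type_right]
  refine Finset.sum_congr rfl fun x _ => ?_
  by_cases h : E x <;> simp [h]

lemma pr_eq {X : Type} [Fintype X] (ν : X → ℝ) (c : X) :
    pr ν (fun x => x = c) = ν c := by
  unfold pr
  simp

lemma pr_factor {X Y : Type} [Fintype X] [Fintype Y] (F : X → ℝ) (G : Y → ℝ)
    (E : X → Prop) (E' : Y → Prop) :
    pr (fun p : X × Y => F p.1 * G p.2) (fun p => E p.1 ∧ E' p.2) = pr F E * pr G E' := by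
  rw [pr_prod_s11]
  unfold pr
  rw [Finset.sum_mul]
  refine Finset.sum_congr rfl fun x _ => ?_
  by_cases h : E x
  · simp [h, Finset.mul_sum]
  · simp [h]

lemma pr_sum_and {Ω B : Type} [Fintype Ω] [Fintype B] (μ : Ω → ℝ) (E : Ω → Prop) (β : Ω → B) :
    pr μ E = ∑ b, pr μ (fun ω => E ω ∧ β ω = b) := by
  unfold pr
  rw [Finset.sum_comm]
  refine Finset.sum_congr rfl fun x _ => ?_
  by_cases h : E x <;> simp [h]

lemma pr_congr {Ω : Type} [Fintype Ω] {μ : Ω → ℝ} {E E' : Ω → Prop} (h : ∀ ω, E ω ↔ E' ω) :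
    pr μ E = pr μ E' := by
  have : E = E' := funext fun ω => propext (h ω)
  rw [this]

lemma pr_pos {Ω : Type} [Fintype Ω] {μ : Ω → ℝ} (hμ : ∀ ω, 0 ≤ μ ω) {E : Ω → Prop} {ω : Ω}
    (hω : 0 < μ ω) (h : E ω) : 0 < pr μ E := by
  unfold pr
  refine Finset.sum_pos' (fun x _ => ?_) ⟨ω, Finset.mem_univ _, by simp [h, hω]⟩
  split_ifs
  · exact hμ x
  · exact le_rfl

lemma ent_eq {Ω A : Type} [Fintype Ω] (μ : Ω → ℝ) (X : Ω → A) :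
    ent μ X = -∑ ω, μ ω * Real.logb 2 (pr μ (fun ω' => X ω' = X ω)) := by
  unfold ent
  congr 1
  rw [← Finset.sum_fiberwise_of_maps_to (s := Finset.univ) (t := Finset.univ.image X) (g := X)
    (fun ω _ => Finset.mem_image_of_mem _ (Finset.mem_univ _))]
  refine Finset.sum_congr rfl fun a _ => ?_
  have h1 : ∑ ω ∈ Finset.univ.filter (fun ω => X ω = a),
      μ ω * Real.logb 2 (pr μ (fun ω' => X ω' = X ω)) =
      ∑ ω ∈ Finset.univ.filter (fun ω => X ω = a),
      μ ω * Real.logb 2 (pr μ (fun ω' => X ω' = a)) := by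
    refine Finset.sum_congr rfl fun ω hω => ?_
    rw [(Finset.mem_filter.1 hω).2]
  rw [h1, ← Finset.sum_mul, Finset.sum_filter]
  congr 1

lemma cmi_zero {Ω A B C : Type} [Fintype Ω] [Fintype A] [Fintype B] (μ : Ω → ℝ)
    (hμ : ∀ ω, 0 ≤ μ ω) (α : Ω → A) (β : Ω → B) (γ : Ω → C) (F : A → C → ℝ) (G : B → C → ℝ)
    (h : ∀ a b c, pr μ (fun ω => (α ω = a ∧ β ω = b) ∧ γ ω = c) = F a c * G b c) :
    condMutualInfo μ α β γ = 0 := by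
  have hα : ∀ a c, pr μ (fun ω => α ω = a ∧ γ ω = c) = F a c * ∑ b, G b c := by
    intro a c
    rw [pr_sum_and μ _ β, Finset.mul_sum]
    refine Finset.sum_congr rfl fun b _ => ?_
    rw [← h]
    exact pr_congr fun ω => by tauto
  have hβ : ∀ b c, pr μ (fun ω => β ω = b ∧ γ ω = c) = (∑ a, F a c) * G b c := by
    intro b c
    rw [pr_sum_and μ _ α, Finset.sum_mul]
    refine Finset.sum_congr rfl fun a _ => ?_
    rw [← h]
    exact pr_congr fun ω => by tauto
  have hγ : ∀ c, pr μ (fun ω => γ ω = c) = (∑ a, F a c) * ∑ b, G b c := by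
    intro c
    rw [pr_sum_and μ _ α, Finset.sum_mul]
    refine Finset.sum_congr rfl fun a _ => ?_
    rw [← hα]
    exact pr_congr fun ω => by tauto
  unfold condMutualInfo condEnt
  simp only [ent_eq, Prod.mk.injEq]
  have key : ∀ ω, μ ω * Real.logb 2 (pr μ (fun ω' => α ω' = α ω ∧ γ ω' = γ ω))
      + μ ω * Real.logb 2 (pr μ (fun ω' => β ω' = β ω ∧ γ ω' = γ ω))
      = μ ω * Real.logb 2 (pr μ (fun ω' => (α ω' = α ω ∧ β ω' = β ω) ∧ γ ω' = γ ω))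
      + μ ω * Real.logb 2 (pr μ (fun ω' => γ ω' = γ ω)) := by
    intro ω
    rcases (hμ ω).eq_or_lt with h0 | h0
    · rw [← h0]; ring
    · rw [← mul_add, ← mul_add, ← Real.logb_mul, ← Real.logb_mul, hα, hβ, h, hγ]
      · congr 2; ring
      · exact (pr_pos hμ h0 (by simp)).ne'
      · exact (pr_pos hμ h0 (by simp)).ne'
      · exact (pr_pos hμ h0 (by simp)).ne'
      · exact (pr_pos hμ h0 (by simp)).ne'
  have key2 := Finset.sum_congr (rfl : (Finset.univ : Finset Ω) = Finset.univ) fun ω _ => key ω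
  rw [Finset.sum_add_distrib, Finset.sum_add_distrib] at key2
  linarith

/-- The symmetric two-letter joint distribution. -/
def DD (η : ℝ) (a b : Bool) : ℝ := if a = b then 1/2 - η else η

/-- Four-letter joint distribution of `(α, β, α*, β*)`. -/
def TT (η : ℝ) (u v w z : Bool) : ℝ :=
  if w = z then (if u = w ∧ v = w then 1/2 - η else 0)
  else (if u = v then η * η / 2 else η * (1 - η) / 2)

/-- Noise kernel. -/
def KK (η : ℝ) (u w : Bool) : ℝ := if u = w then 1 - η else η

lemma TT_nonneg {η : ℝ} (h0 : 0 ≤ η) (h1 : η ≤ 1/4) (u v w z : Bool) : 0 ≤ TT η u v w z := by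
  unfold TT
  have : 0 ≤ 1 - η := by linarith
  split_ifs
  · linarith
  · exact le_rfl
  · positivity
  · positivity

lemma TT_sum_wz (η : ℝ) (u v : Bool) : ∑ w, ∑ z, TT η u v w z = DD (η * (1 - η)) u v := by
  cases u <;> cases v <;> simp [TT, DD] <;> ring

lemma TT_sum_uv (η : ℝ) (w z : Bool) : ∑ u, ∑ v, TT η u v w z = DD η w z := by
  cases w <;> cases z <;> simp [TT, DD] <;> ring

lemma TT_sum_z (η : ℝ) (u v w : Bool) :
    ∑ z, TT η u v w z = KK η u w * (KK η v w * (1/2)) := by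
  cases u <;> cases v <;> cases w <;> simp [TT, KK] <;> ring

lemma TT_sum_w (η : ℝ) (u v z : Bool) :
    ∑ w, TT η u v w z = KK η u z * (KK η v z * (1/2)) := by
  cases u <;> cases v <;> cases z <;> simp [TT, KK] <;> ring

lemma DD_sum (η : ℝ) : ∑ u, ∑ v, DD η u v = 1 := by
  simp [DD]; ring

lemma tens {r : ℕ} (h : Fin r → Bool → ℝ) :
    ∑ z : Fin r → Bool, ∏ i, h i (z i) = ∏ i, ∑ z : Bool, h i z := by
  rw [Finset.prod_univ_sum, Fintype.piFinset_univ]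

/-- Tensor power of `DD`. -/
def DP (r : ℕ) (η : ℝ) (p : (Fin r → Bool) × (Fin r → Bool)) : ℝ := ∏ i, DD η (p.1 i) (p.2 i)

/-- Tensor power of `TT`. -/
def TP (r : ℕ) (η : ℝ)
    (p : ((Fin r → Bool) × (Fin r → Bool)) × ((Fin r → Bool) × (Fin r → Bool))) : ℝ :=
  ∏ i, TT η (p.1.1 i) (p.1.2 i) (p.2.1 i) (p.2.2 i)

lemma DP_sum (r : ℕ) (η : ℝ) : ∑ p, DP r η p = 1 := by
  unfold DP
  rw [Fintype.sum_prod_type]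
  have h1 : ∀ u : Fin r → Bool, ∑ v : Fin r → Bool, ∏ i, DD η (u i) (v i) =
      ∏ i, ∑ v, DD η (u i) v := fun u => tens (fun i v => DD η (u i) v)
  simp only [h1]
  rw [tens (fun i u => ∑ v, DD η u v)]
  simp only [DD_sum, Finset.prod_const_one]

lemma TP_sum_snd (r : ℕ) (η : ℝ) (x : (Fin r → Bool) × (Fin r → Bool)) :
    ∑ y, TP r η (x, y) = DP r (η * (1 - η)) x := by
  unfold TP DP
  rw [Fintype.sum_prod_type]
  have h1 : ∀ w : Fin r → Bool, ∑ z : Fin r → Bool, ∏ i, TT η (x.1 i) (x.2 i) (w i) (z i) =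
      ∏ i, ∑ z, TT η (x.1 i) (x.2 i) (w i) z :=
    fun w => tens (fun i z => TT η (x.1 i) (x.2 i) (w i) z)
  simp only [h1]
  rw [tens (fun i w => ∑ z, TT η (x.1 i) (x.2 i) w z)]
  simp only [TT_sum_wz]

lemma TP_sum_fst (r : ℕ) (η : ℝ) (y : (Fin r → Bool) × (Fin r → Bool)) :
    ∑ x, TP r η (x, y) = DP r η y := by
  unfold TP DP
  rw [Fintype.sum_prod_type]
  have h1 : ∀ u : Fin r → Bool, ∑ v : Fin r → Bool, ∏ i, TT η (u i) (v i) (y.1 i) (y.2 i) =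
      ∏ i, ∑ v, TT η (u i) v (y.1 i) (y.2 i) :=
    fun u => tens (fun i v => TT η (u i) v (y.1 i) (y.2 i))
  simp only [h1]
  rw [tens (fun i u => ∑ v, TT η u v (y.1 i) (y.2 i))]
  simp only [TT_sum_uv]

lemma TP_pr_w (r : ℕ) (η : ℝ) (x : (Fin r → Bool) × (Fin r → Bool)) (c : Fin r → Bool) :
    pr (fun y => TP r η (x, y)) (fun y => y.1 = c) =
      (∏ i, KK η (x.1 i) (c i)) * (∏ i, KK η (x.2 i) (c i) * (1/2)) := by
  rw [pr_fst _ (fun w => w = c), pr_eq]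
  unfold TP
  simp only
  rw [tens (fun i z => TT η (x.1 i) (x.2 i) (c i) z)]
  simp only [TT_sum_z, Finset.prod_mul_distrib]

lemma TP_pr_z (r : ℕ) (η : ℝ) (x : (Fin r → Bool) × (Fin r → Bool)) (c : Fin r → Bool) :
    pr (fun y => TP r η (x, y)) (fun y => y.2 = c) =
      (∏ i, KK η (x.1 i) (c i)) * (∏ i, KK η (x.2 i) (c i) * (1/2)) := by
  rw [pr_snd _ (fun w => w = c), pr_eq]
  unfold TP
  simp only
  rw [tens (fun i w => TT η (x.1 i) (x.2 i) w (c i))]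
  simp only [TT_sum_w, Finset.prod_mul_distrib]

/-- The sequence of noise levels. -/
def ee : ℕ → ℝ
  | 0 => 1/4
  | k+1 => ee k * (1 - ee k)

lemma ee_bounds (k : ℕ) : 0 ≤ ee k ∧ ee k ≤ 1 / ((k:ℝ) + 4) := by
  induction k with
  | zero => norm_num [ee]
  | succ k ih =>
    obtain ⟨h0, h1⟩ := ih
    have hk : (0:ℝ) ≤ k := Nat.cast_nonneg k
    have h4 : 1 / ((k:ℝ) + 4) ≤ 1/4 := by
      apply one_div_le_one_div_of_le <;> linarith
    refine ⟨mul_nonneg h0 (by linarith), ?_⟩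
    have h2 : ee k * (1 - ee k) ≤ (1 / ((k:ℝ) + 4)) * (1 - 1 / ((k:ℝ) + 4)) := by
      nlinarith
    refine h2.trans ?_
    push_cast
    rw [show (1 / ((k:ℝ) + 4)) * (1 - 1 / ((k:ℝ) + 4)) = (k + 3) / ((k:ℝ) + 4)^2 by
      field_simp; ring]
    rw [div_le_div_iff₀ (by positivity) (by positivity)]
    nlinarith

lemma ee_le (k : ℕ) : ee k ≤ 1/4 := by
  refine (ee_bounds k).2.trans ?_
  have hk : (0:ℝ) ≤ k := Nat.cast_nonneg k
  apply one_div_le_one_div_of_le <;> linarith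

lemma order_main (r k : ℕ) : ∀ (Ω A B : Type) (iΩ : Fintype Ω) [Fintype A] [Fintype B]
    (μ : Ω → ℝ) (α : Ω → A) (β : Ω → B) (f : (Fin r → Bool) → A) (g : (Fin r → Bool) → B),
    (∀ a b, pr μ (fun ω => α ω = a ∧ β ω = b) =
      pr (DP r (ee k)) (fun p => f p.1 = a ∧ g p.2 = b)) →
    CondIndepOrderAux k Ω A B iΩ μ α β := by
  induction k with
  | zero =>
    intro Ω A B iΩ _ _ μ α β f g h
    unfold CondIndepOrderAux
    have hD : DP r (ee 0) = fun p => (fun _ => (1/2:ℝ)^r) p.1 * (fun _ => (1/2:ℝ)^r) p.2 := by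
      funext p
      have : ∀ a b, DD (1/4) a b = 1/2 * (1/2) := by
        intro a b; unfold DD; split_ifs <;> norm_num
      simp only [DP, ee, this, Finset.prod_const, Finset.card_univ, Fintype.card_fin, mul_pow]
    have h1 : ∀ {X : Type} [Fintype X] (f : (Fin r → Bool) → X),
        ∑ x, pr (fun _ => (1/2:ℝ)^r) (fun u => f u = x) = 1 := by
      intro X _ f
      have := pr_sum_and (fun _ : Fin r → Bool => (1/2:ℝ)^r) (fun _ => True) f
      simp only [true_and] at this
      rw [← this]
      simp [pr]
    have h' : ∀ a b, pr μ (fun ω => α ω = a ∧ β ω = b) =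
        pr (fun _ => (1/2:ℝ)^r) (fun u => f u = a) *
          pr (fun _ => (1/2:ℝ)^r) (fun u => g u = b) := by
      intro a b
      rw [h, hD]
      exact pr_factor (fun _ => (1/2:ℝ)^r) (fun _ => (1/2:ℝ)^r) (fun u => f u = a) (fun u => g u = b)
    intro a b
    have ha : pr μ (fun ω => α ω = a) = pr (fun _ => (1/2:ℝ)^r) (fun u => f u = a) := by
      rw [pr_sum_and μ _ β]
      simp only [h', ← Finset.mul_sum, h1, mul_one]
    have hb : pr μ (fun ω => β ω = b) = pr (fun _ => (1/2:ℝ)^r) (fun u => g u = b) := by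
      rw [pr_sum_and μ _ α]
      simp only [and_comm, h', ← Finset.sum_mul, h1, one_mul]
    rw [ha, hb, h']
  | succ k ih =>
    intro Ω A B iΩ _ _ μ α β f g h
    unfold CondIndepOrderAux
    have hn : ∀ p, 0 ≤ TP r (ee k) p := fun p =>
      Finset.prod_nonneg fun i _ => TT_nonneg (ee_bounds k).1 (ee_le k) _ _ _ _
    refine ⟨((Fin r → Bool) × (Fin r → Bool)) × ((Fin r → Bool) × (Fin r → Bool)),
      Fin r → Bool, Fin r → Bool, inferInstance, TP r (ee k), fun p => f p.1.1, fun p => g p.1.2,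
      fun p => p.2.1, fun p => p.2.2, ⟨hn, ?_⟩, ?_, ?_, ?_, ?_⟩
    · rw [Fintype.sum_prod_type]
      simp only [TP_sum_snd, DP_sum]
    · intro a b
      rw [h, pr_fst _ (fun x : (Fin r → Bool) × (Fin r → Bool) => f x.1 = a ∧ g x.2 = b)]
      simp only [TP_sum_snd]
      rfl
    · refine cmi_zero _ hn _ _ _
        (fun a c => pr (fun u => ∏ i, KK (ee k) (u i) (c i)) (fun u => f u = a))
        (fun b c => pr (fun v => ∏ i, KK (ee k) (v i) (c i) * (1/2)) (fun v => g v = b)) ?_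
      intro a b c
      refine (pr_prod_s11 (TP r (ee k))
        (fun x : (Fin r → Bool) × (Fin r → Bool) => f x.1 = a ∧ g x.2 = b)
        (fun y : (Fin r → Bool) × (Fin r → Bool) => y.1 = c)).trans ?_
      simp only [TP_pr_w]
      exact pr_factor (fun u : Fin r → Bool => ∏ i, KK (ee k) (u i) (c i))
        (fun v : Fin r → Bool => ∏ i, KK (ee k) (v i) (c i) * (1/2))
        (fun u => f u = a) (fun v => g v = b)
    · refine cmi_zero _ hn _ _ _
        (fun a c => pr (fun u => ∏ i, KK (ee k) (u i) (c i)) (fun u => f u = a))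
        (fun b c => pr (fun v => ∏ i, KK (ee k) (v i) (c i) * (1/2)) (fun v => g v = b)) ?_
      intro a b c
      refine (pr_prod_s11 (TP r (ee k))
        (fun x : (Fin r → Bool) × (Fin r → Bool) => f x.1 = a ∧ g x.2 = b)
        (fun y : (Fin r → Bool) × (Fin r → Bool) => y.2 = c)).trans ?_
      simp only [TP_pr_z]
      exact pr_factor (fun u : Fin r → Bool => ∏ i, KK (ee k) (u i) (c i))
        (fun v : Fin r → Bool => ∏ i, KK (ee k) (v i) (c i) * (1/2))
        (fun u => f u = a) (fun v => g v = b)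
    · refine ih _ _ _ _ _ _ _ id id ?_
      intro a b
      rw [pr_snd _ (fun x : (Fin r → Bool) × (Fin r → Bool) => x.1 = a ∧ x.2 = b)]
      simp only [TP_sum_fst]
      rfl

lemma DP_nonneg (r k : ℕ) (p : (Fin r → Bool) × (Fin r → Bool)) : 0 ≤ DP r (ee k) p := by
  refine Finset.prod_nonneg fun i _ => ?_
  have h0 := (ee_bounds k).1
  have h1 := ee_le k
  unfold DD
  split_ifs <;> linarith

/-- A map from a large set whose fibres approximate prescribed frequencies. -/
lemma exists_round {P S : Type} [Fintype P] [Fintype S] (a : P → ℝ) (ha : ∀ p, 0 ≤ a p)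
    (hs : ∑ p, a p = 1) : ∃ f : S → P, ∀ p,
      (Fintype.card S : ℝ) * a p - 1 ≤ ((Finset.univ.filter fun s => f s = p).card : ℝ) := by
  have hne : Nonempty P := by
    by_contra h
    rw [not_nonempty_iff] at h
    simp at hs
  set c : P → ℕ := fun p => ⌊(Fintype.card S : ℝ) * a p⌋₊ with hc
  have hcard : Fintype.card (Σ p, Fin (c p)) ≤ Fintype.card S := by
    simp only [Fintype.card_sigma, Fintype.card_fin]
    have : ((∑ p, c p : ℕ) : ℝ) ≤ Fintype.card S := by
      push_cast
      calc ∑ p, (c p : ℝ) ≤ ∑ p, (Fintype.card S : ℝ) * a p :=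
            Finset.sum_le_sum fun p _ => Nat.floor_le (mul_nonneg (Nat.cast_nonneg _) (ha p))
        _ = Fintype.card S := by rw [← Finset.mul_sum, hs, mul_one]
    exact_mod_cast this
  obtain ⟨φ⟩ := Function.Embedding.nonempty_of_card_le hcard
  refine ⟨Function.extend φ (fun x => x.1) (fun _ => Classical.choice hne), fun p => ?_⟩
  have h1 : c p ≤ (Finset.univ.filter fun s =>
      Function.extend φ (fun x => x.1) (fun _ => Classical.choice hne) s = p).card := by
    have : (Finset.univ.image fun i : Fin (c p) => φ ⟨p, i⟩).card = c p := by
      rw [Finset.card_image_of_injective]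
      · simp
      · intro i j hij
        have := φ.injective hij
        simpa using this
    rw [← this]
    refine Finset.card_le_card ?_
    intro s hs
    obtain ⟨i, _, rfl⟩ := Finset.mem_image.1 hs
    simp [φ.injective.extend_apply]
  have h2 : (Fintype.card S : ℝ) * a p - 1 ≤ c p := (Nat.sub_one_lt_floor _).le
  exact h2.trans (by exact_mod_cast h1)

end

/-- The set of good matrices is dense in the set of all joint
probability matrices. -/
theorem isGoodMatrix_dense {m n : ℕ} (A : Matrix (Fin m) (Fin n) ℝ)
    (hA : IsJointProbMatrix A) (δ : ℝ) (hδ : 0 < δ) :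
    ∃ B : Matrix (Fin m) (Fin n) ℝ, IsJointProbMatrix B ∧ IsGoodMatrix B ∧
      ∀ i j, |A i j - B i j| < δ := by
  set N : ℝ := (m:ℝ) * n + 1 with hN
  have hN0 : 0 < N := by positivity
  set d : ℝ := δ / N with hd
  have hd0 : 0 < d := by positivity
  obtain ⟨r, hr⟩ := exists_pow_lt_of_lt_one (half_pos hd0) (show (1/2:ℝ) < 1 by norm_num)
  obtain ⟨k, hk⟩ := exists_nat_gt (2 * (r:ℝ) / (d/2))
  have hk' : 2 * (r:ℝ) * ee k ≤ d / 2 := by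
    have h1 := (ee_bounds k).2
    have h2 : 2 * (r:ℝ) < k * (d/2) := by rwa [div_lt_iff₀ (half_pos hd0)] at hk
    have hk0 : (0:ℝ) ≤ k := Nat.cast_nonneg k
    calc 2 * (r:ℝ) * ee k ≤ 2 * (r:ℝ) * (1 / ((k:ℝ)+4)) := by gcongr
      _ = 2 * (r:ℝ) / ((k:ℝ)+4) := by ring
      _ ≤ d / 2 := by
        rw [div_le_iff₀ (by positivity)]
        nlinarith
  have he0 := (ee_bounds k).1
  have he1 := ee_le k
  obtain ⟨f, hf⟩ := exists_round (S := Fin r → Bool) (fun p : Fin m × Fin n => A p.1 p.2)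
    (fun p => hA.1 _ _) (by rw [Fintype.sum_prod_type]; exact hA.2)
  set B : Matrix (Fin m) (Fin n) ℝ := fun i j =>
    pr (DP r (ee k)) (fun p => (f p.1).1 = i ∧ (f p.2).2 = j) with hB
  have hB0 : ∀ i j, 0 ≤ B i j := by
    intro i j
    refine Finset.sum_nonneg fun p _ => ?_
    split_ifs
    · exact DP_nonneg r k p
    · exact le_rfl
  have hB1 : ∑ i, ∑ j, B i j = 1 := by
    simp only [hB]
    have h1 : ∀ i, ∑ j, pr (DP r (ee k)) (fun p => (f p.1).1 = i ∧ (f p.2).2 = j) =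
        pr (DP r (ee k)) (fun p => True ∧ (f p.1).1 = i) := by
      intro i
      rw [← pr_sum_and (DP r (ee k)) (fun p => (f p.1).1 = i) (fun p => (f p.2).2)]
      exact pr_congr fun p => by simp
    simp only [h1]
    rw [← pr_sum_and (DP r (ee k)) (fun _ => True) (fun p => (f p.1).1)]
    simp [pr, DP_sum]
  have hlow : ∀ i j, A i j - d ≤ B i j := by
    intro i j
    have hA1 : A i j ≤ 1 := by
      rw [← hA.2]
      refine le_trans ?_ (Finset.single_le_sum (f := fun i => ∑ j, A i j)
        (fun i _ => Finset.sum_nonneg fun j _ => hA.1 i j) (Finset.mem_univ i))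
      exact Finset.single_le_sum (f := fun j => A i j) (fun j _ => hA.1 i j) (Finset.mem_univ j)
    have h1 : ((Finset.univ.filter fun s => f s = (i, j)).card : ℝ) * (1/2 - ee k)^r ≤ B i j := by
      have hdiag : ∀ u, DP r (ee k) (u, u) = (1/2 - ee k)^r := by
        intro u; simp [DP, DD]
      have hBe : B i j = ∑ u, ∑ v,
          (if (f u).1 = i ∧ (f v).2 = j then DP r (ee k) (u, v) else 0) := by
        simp only [hB]
        unfold pr
        rw [Fintype.sum_prod_type]
        exact Finset.sum_congr rfl fun u _ => Finset.sum_congr rfl fun v _ => by congr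
      rw [hBe, ← nsmul_eq_mul, ← Finset.sum_const, Finset.sum_filter]
      refine Finset.sum_le_sum fun u _ => ?_
      have hnn : ∀ v, 0 ≤ (if (f u).1 = i ∧ (f v).2 = j then DP r (ee k) (u, v) else 0) := by
        intro v
        split_ifs
        · exact DP_nonneg r k _
        · exact le_rfl
      refine le_trans ?_ (Finset.single_le_sum (f := fun v =>
        (if (f u).1 = i ∧ (f v).2 = j then DP r (ee k) (u, v) else 0))
        (fun v _ => hnn v) (Finset.mem_univ u))
      by_cases h : f u = (i, j)
      · simp [h, hdiag]
      · simp only [h, if_false]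
        exact hnn u
    have h2 := hf (i, j)
    simp only [Fintype.card_pi, Fintype.card_bool, Finset.prod_const, Finset.card_univ,
      Fintype.card_fin] at h2
    push_cast at h2
    have h3 : (1 - 2 * ee k)^r = 2^r * (1/2 - ee k)^r := by
      rw [← mul_pow]; congr 1; ring
    have h4 : (1/2 - ee k)^r = (1/2)^r * (1 - 2 * ee k)^r := by
      rw [← mul_pow]; congr 1; ring
    have h5 : 0 ≤ (1/2 - ee k)^r := pow_nonneg (by linarith) _
    have h6 : 1 - 2 * (r:ℝ) * ee k ≤ (1 - 2 * ee k)^r := by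
      have := one_add_mul_le_pow (show (-2:ℝ) ≤ -2 * ee k by linarith) r
      calc 1 - 2 * (r:ℝ) * ee k = 1 + r * (-2 * ee k) := by ring
        _ ≤ (1 + -2 * ee k)^r := this
        _ = (1 - 2 * ee k)^r := by congr 1; ring
    have h7 : (1 - 2 * ee k)^r ≤ 1 := pow_le_one₀ (by linarith) (by linarith)
    have h8 := mul_le_mul_of_nonneg_right h2 h5
    have h9 : (2^r * A i j - 1) * (1/2 - ee k)^r =
        A i j * (1 - 2 * ee k)^r - (1/2)^r * (1 - 2 * ee k)^r := by
      rw [sub_mul, ← h4, h3]; ring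
    have h10 : (0:ℝ) ≤ (1/2)^r := by positivity
    have h11 := hA.1 i j
    have h12 : A i j * (1 - (1 - 2 * ee k)^r) ≤ 1 * (1 - (1 - 2 * ee k)^r) :=
      mul_le_mul_of_nonneg_right hA1 (by linarith)
    have h13 : (1/2:ℝ)^r * (1 - 2 * ee k)^r ≤ (1/2)^r * 1 := mul_le_mul_of_nonneg_left h7 h10
    have h14 : A i j * (1 - 2 * ee k)^r - (1/2)^r * (1 - 2 * ee k)^r ≤ B i j := by
      rw [← h9]
      refine h8.trans (le_trans (le_of_eq ?_) h1)
      congr!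
    clear h1 h2 h3 h4 h5 h8 h9
    generalize (1 - 2 * ee k)^r = x at *
    generalize (1/2:ℝ)^r = y at *
    linarith
  refine ⟨B, ⟨hB0, hB1⟩, ?_, ?_⟩
  · refine ⟨(Fin r → Bool) × (Fin r → Bool), inferInstance, DP r (ee k), fun p => (f p.1).1,
      fun p => (f p.2).2, k, ⟨DP_nonneg r k, DP_sum r _⟩, fun i j => rfl, ?_⟩
    exact order_main r k _ _ _ _ _ _ _ (fun u => (f u).1) (fun u => (f u).2) fun a b => rfl
  · intro i j
    have hdN : d * N = δ := by rw [hd]; field_simp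
    have hup : B i j - A i j + d ≤ ∑ i, ∑ j, (B i j - A i j + d) := by
      have hnn : ∀ i j, 0 ≤ B i j - A i j + d := fun i j => by linarith [hlow i j]
      refine le_trans ?_ (Finset.single_le_sum (f := fun i => ∑ j, (B i j - A i j + d))
        (fun i _ => Finset.sum_nonneg fun j _ => hnn i j) (Finset.mem_univ i))
      exact Finset.single_le_sum (f := fun j => B i j - A i j + d)
        (fun j _ => hnn i j) (Finset.mem_univ j)
    have hsum : ∑ i, ∑ j, (B i j - A i j + d) = m * n * d := by
      simp only [Finset.sum_add_distrib, Finset.sum_sub_distrib, hB1, hA.2]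
      simp; ring
    have hm : 1 ≤ (m:ℝ) := by
      have : 0 < m := i.pos
      exact_mod_cast this
    have hn : 1 ≤ (n:ℝ) := by
      have : 0 < n := j.pos
      exact_mod_cast this
    have hmn : 1 ≤ (m:ℝ) * n := one_le_mul_of_one_le_of_one_le hm hn
    have := hlow i j
    rw [abs_lt]
    constructor <;> nlinarith
end
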